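/- arXiv:2210.00653 — 4 statements merged into one kernel-verified Lean document; each statement's English description precedes it below -/
import Mathlib

section
/- Suppose f satisfies the local tangential cone condition with constants η_1, …, η_m ∈ [0, 1/2). Let x⋆ ∈ ℝⁿ satisfy f(x⋆) = 0, let x ∈ ℝⁿ, and let i be an index with ∇f_i(x) ≠ 0. Then the nonlinear Kaczmarz update satisfies ‖T_i(x) − x⋆‖² ≤ ‖x − x⋆‖² − (1 − 2·η_i)·|f_i(x)|²/‖∇f_i(x)‖². -/
open scoped RealInnerProductSpace
open Finset

/-!
Replacing `x` by its Kaczmarz update changes the squared distance to any point `y` by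
`-(2 * f x * ⟪∇f x, x - y⟫ - f x ^ 2) / ‖∇f x‖ ^ 2`. If `f y = 0`, the tangential cone condition
says that `⟪∇f x, x - y⟫` approximates `f x` with relative error at most `η`, so
`f x * ⟪∇f x, x - y⟫ ≥ (1 - η) * f x ^ 2`, and the numerator is at least `(1 - 2 * η) * f x ^ 2`.
-/

section Kaczmarz

variable {E : Type*} [NormedAddCommGroup E] [InnerProductSpace ℝ E]

/-- The nonlinear Kaczmarz update of `x` for the equation `f = 0`, where `g` plays the role of the
gradient of `f`. If `g x = 0`, division by zero makes the update return `x`. -/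
noncomputable def kaczmarzUpdate (f : E → ℝ) (g : E → E) (x : E) : E :=
  x - (f x / ‖g x‖ ^ 2) • g x

theorem norm_kaczmarzUpdate_sub_sq (f : E → ℝ) {g : E → E} {x : E} (hg : g x ≠ 0) (y : E) :
    ‖kaczmarzUpdate f g x - y‖ ^ 2 =
      ‖x - y‖ ^ 2 - (2 * (f x * ⟪g x, x - y⟫) - f x ^ 2) / ‖g x‖ ^ 2 := by
  have hnorm : ‖g x‖ ≠ 0 := norm_ne_zero_iff.mpr hg
  rw [kaczmarzUpdate, sub_right_comm, norm_sub_sq_real, real_inner_smul_right, real_inner_comm,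
    norm_smul, mul_pow, Real.norm_eq_abs, sq_abs]
  field_simp
  ring

theorem one_sub_mul_sq_le_mul_of_abs_sub_le {c p η : ℝ} (h : |c - p| ≤ η * |c|) :
    (1 - η) * c ^ 2 ≤ c * p := by
  have herror : c * (c - p) ≤ η * c ^ 2 :=
    calc
      c * (c - p) ≤ |c| * |c - p| := (le_abs_self _).trans_eq (abs_mul _ _)
      _ ≤ |c| * (η * |c|) := by gcongr
      _ = η * c ^ 2 := by rw [← sq_abs c]; ring
  linarith

theorem stmt0_general {f : E → ℝ} {g : E → E} {η : ℝ} {x xs : E}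
    (hgrad : HasFDerivAt f (innerSL ℝ (g x)) x)
    (htcc : |f x - f xs - ⟪g x, x - xs⟫| ≤ η * |f x - f xs|)
    (hxs : f xs = 0) (hg : g x ≠ 0) :
    ‖kaczmarzUpdate f g x - xs‖ ^ 2
      ≤ ‖x - xs‖ ^ 2 - (1 - 2 * η) * (f x ^ 2 / ‖g x‖ ^ 2) := by
  rw [hxs, sub_zero] at htcc
  have hinner : (1 - η) * f x ^ 2 ≤ f x * ⟪g x, x - xs⟫ :=
    one_sub_mul_sq_le_mul_of_abs_sub_le htcc
  rw [norm_kaczmarzUpdate_sub_sq f hg, ← mul_div_assoc]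
  gcongr
  linarith

end Kaczmarz

/-- one-step estimate for the nonlinear Kaczmarz update
(Lemma on the local tangential cone condition). -/
theorem stmt0 {n m : ℕ} (hn : 0 < n) (hm : 0 < m)
    (f : Fin m → EuclideanSpace ℝ (Fin n) → ℝ)
    (g : Fin m → EuclideanSpace ℝ (Fin n) → EuclideanSpace ℝ (Fin n))
    (hgrad : ∀ i y, HasGradientAt (f i) (g i y) y)
    (η : Fin m → ℝ) (hη0 : ∀ i, 0 ≤ η i) (hη1 : ∀ i, η i < 1 / 2)
    (htcc : ∀ i x₁ x₂, |f i x₁ - f i x₂ - ⟪g i x₁, x₁ - x₂⟫| ≤ η i * |f i x₁ - f i x₂|)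
    (xs : EuclideanSpace ℝ (Fin n)) (hxs : ∀ i, f i xs = 0)
    (x : EuclideanSpace ℝ (Fin n)) (i : Fin m) (hgi : g i x ≠ 0) :
    ‖(x - (f i x / ‖g i x‖ ^ 2) • g i x) - xs‖ ^ 2
      ≤ ‖x - xs‖ ^ 2 - (1 - 2 * η i) * ((f i x) ^ 2 / ‖g i x‖ ^ 2) :=
  stmt0_general (hgrad i x).hasFDerivAt (htcc i x xs) (hxs i) hgi
end

section
/- Suppose f satisfies the local tangential cone condition with constants η_1, …, η_m ∈ [0, 1/2), η := max_i η_i, and x⋆ ∈ ℝⁿ satisfies f(x⋆) = 0. Let x ∈ ℝⁿ, let τ ⊆ {1,…,m} be a nonempty index set, let A = f'_τ(x), and let B be the Moore–Penrose pseudoinverse of A. Let h, σ ≥ 0 be real numbers such that h·‖v‖ ≤ ‖Bv‖ ≤ σ·‖v‖ for every v ∈ ℝ^τ. Then ‖(x − B·f_τ(x)) − x⋆‖² ≤ ‖x − x⋆‖² − (h² − 2·η·σ²)·‖f_τ(x)‖². -/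
open scoped RealInnerProductSpace
open Finset Matrix

/-!
Put `e = x - x⋆` and `y = f x`. Since `B * A * B = B` and `B * A` is self-adjoint,
`⟪e, B y⟫ = ⟪B (A e), B y⟫`, so that
`‖e - B y‖² = ‖e‖² - ‖B y‖² + 2 ⟪B (y - A e), B y⟫`.
The lower bound on `B` controls the second term. As `f x⋆ = 0`, the tangential cone condition says
that the linearization error `y - A e` has norm at most `η ‖y‖`, so the last term is at most
`2 η σ² ‖y‖²`.
-/

section OuterInverse

variable {E F : Type*} [SeminormedAddCommGroup E] [InnerProductSpace ℝ E]

theorem norm_sub_map_sq_of_comp_isSymmetric [AddCommGroup F] [Module ℝ F]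
    {A : E →ₗ[ℝ] F} {B : F →ₗ[ℝ] E} (hBAB : B ∘ₗ A ∘ₗ B = B) (hBA : (B ∘ₗ A).IsSymmetric)
    (e : E) (y : F) :
    ‖e - B y‖ ^ 2 = ‖e‖ ^ 2 - ‖B y‖ ^ 2 + 2 * ⟪B (y - A e), B y⟫ := by
  have inner_eq : ⟪e, B y⟫ = ⟪B (A e), B y⟫ := calc
    ⟪e, B y⟫ = ⟪e, B (A (B y))⟫ := by rw [show B (A (B y)) = B y from LinearMap.congr_fun hBAB y]
    _ = ⟪B (A e), B y⟫ := (hBA e (B y)).symm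
  rw [norm_sub_sq_real, inner_eq, map_sub, inner_sub_left, real_inner_self_eq_norm_sq]
  ring

theorem norm_sub_map_sq_le_of_comp_isSymmetric [SeminormedAddCommGroup F] [Module ℝ F]
    {A : E →ₗ[ℝ] F} {B : F →ₗ[ℝ] E} (hBAB : B ∘ₗ A ∘ₗ B = B) (hBA : (B ∘ₗ A).IsSymmetric)
    {h σ η : ℝ} {e : E} {y : F} (hh : 0 ≤ h) (hlow : h * ‖y‖ ≤ ‖B y‖)
    (hup : ∀ v, ‖B v‖ ≤ σ * ‖v‖) (hres : ‖y - A e‖ ≤ η * ‖y‖) :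
    ‖e - B y‖ ^ 2 ≤ ‖e‖ ^ 2 - (h ^ 2 - 2 * η * σ ^ 2) * ‖y‖ ^ 2 := by
  have lower : h ^ 2 * ‖y‖ ^ 2 ≤ ‖B y‖ ^ 2 := by
    rw [← mul_pow]
    gcongr
  have cross : ⟪B (y - A e), B y⟫ ≤ η * σ ^ 2 * ‖y‖ ^ 2 := calc
    ⟪B (y - A e), B y⟫ ≤ ‖B (y - A e)‖ * ‖B y‖ := real_inner_le_norm _ _
    _ ≤ (σ * ‖y - A e‖) * (σ * ‖y‖) :=
      mul_le_mul (hup _) (hup _) (norm_nonneg _) ((norm_nonneg _).trans (hup _))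
    _ = σ ^ 2 * (‖y - A e‖ * ‖y‖) := by ring
    _ ≤ σ ^ 2 * (η * ‖y‖ * ‖y‖) := by gcongr
    _ = η * σ ^ 2 * ‖y‖ ^ 2 := by ring
  rw [norm_sub_map_sq_of_comp_isSymmetric hBAB hBA]
  linarith

end OuterInverse

theorem stmt2_general {E F : Type*} [NormedAddCommGroup E] [InnerProductSpace ℝ E]
    [NormedAddCommGroup F] [NormedSpace ℝ F]
    {f : E → F} {x xs : E} {A : E →L[ℝ] F} (_hf : HasFDerivAt f A x) (hxs : f xs = 0)
    {η : ℝ} (htcc : ‖f x - f xs - A (x - xs)‖ ≤ η * ‖f x - f xs‖)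
    {B : F →ₗ[ℝ] E} (hBAB : B ∘ₗ (A : E →ₗ[ℝ] F) ∘ₗ B = B)
    (hBA : (B ∘ₗ (A : E →ₗ[ℝ] F)).IsSymmetric)
    {h σ : ℝ} (hh : 0 ≤ h) (hlow : h * ‖f x‖ ≤ ‖B (f x)‖) (hup : ∀ v, ‖B v‖ ≤ σ * ‖v‖) :
    ‖x - B (f x) - xs‖ ^ 2 ≤ ‖x - xs‖ ^ 2 - (h ^ 2 - 2 * η * σ ^ 2) * ‖f x‖ ^ 2 := by
  rw [hxs, sub_zero] at htcc
  rw [sub_right_comm]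
  exact norm_sub_map_sq_le_of_comp_isSymmetric hBAB hBA hh hlow hup htcc

theorem norm_le_mul_norm_of_forall_abs_apply_le {ι : Type*} [Fintype ι]
    {u v : EuclideanSpace ℝ ι} {c : ℝ} (hc : 0 ≤ c) (huv : ∀ i, |u i| ≤ c * |v i|) :
    ‖u‖ ≤ c * ‖v‖ := by
  refine le_of_sq_le_sq ?_ (by positivity)
  simp only [mul_pow, EuclideanSpace.real_norm_sq_eq, mul_sum]
  gcongr with i
  simpa [mul_pow] using pow_le_pow_left₀ (abs_nonneg (u i)) (huv i) 2

theorem hasFDerivAt_toLp_of_hasGradientAt {E ι : Type*} [NormedAddCommGroup E]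
    [InnerProductSpace ℝ E] [CompleteSpace E] [Finite ι]
    {f : ι → E → ℝ} {g : ι → E} {x : E} (hg : ∀ i, HasGradientAt (f i) (g i) x)
    {A : E →L[ℝ] EuclideanSpace ℝ ι} (hA : ∀ v i, A v i = ⟪g i, v⟫) :
    HasFDerivAt (fun y => WithLp.toLp 2 fun i => f i y) A x := by
  rw [← hasFDerivWithinAt_univ, hasFDerivWithinAt_euclidean]
  refine fun i => ((hg i).hasFDerivAt.congr_fderiv ?_).hasFDerivWithinAt
  ext v
  exact (hA v i).symm

theorem toEuclideanLin_apply_eq_inner {ι κ : Type*} [Fintype κ] [DecidableEq κ]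
    {A : Matrix ι κ ℝ} {g : ι → EuclideanSpace ℝ κ} (hA : ∀ i j, A i j = g i j)
    (v : EuclideanSpace ℝ κ) (i : ι) : A.toEuclideanLin v i = ⟪g i, v⟫ := by
  simp [mulVec, dotProduct, PiLp.inner_apply, hA, mul_comm]

theorem norm_toLp_eq_sqrt_sum_sq {ι : Type*} [Fintype ι] (v : ι → ℝ) :
    ‖WithLp.toLp 2 v‖ = √(∑ i, v i ^ 2) := by
  simp [EuclideanSpace.norm_eq]

section Penrose

variable {𝕜 ι κ : Type*} [RCLike 𝕜] [Fintype ι] [DecidableEq ι] [Fintype κ] [DecidableEq κ]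
  {A : Matrix ι κ 𝕜} {B : Matrix κ ι 𝕜}

theorem toEuclideanLin_comp_comp_self (hBAB : B * A * B = B) :
    B.toEuclideanLin ∘ₗ A.toEuclideanLin ∘ₗ B.toEuclideanLin = B.toEuclideanLin := by
  rw [← toLpLin_mul_same, ← toLpLin_mul_same, ← Matrix.mul_assoc, hBAB]

theorem isSymmetric_toEuclideanLin_comp (hBA : (B * A).IsHermitian) :
    (B.toEuclideanLin ∘ₗ A.toEuclideanLin).IsSymmetric := by
  rwa [← toLpLin_mul_same, isSymmetric_toEuclideanLin_iff]

end Penrose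

/-- one-step estimate for the block nonlinear Kaczmarz update
using the Moore–Penrose pseudoinverse of the restricted Jacobian. -/
theorem stmt2 {n m : ℕ} (hn : 0 < n) (hm : 0 < m)
    (f : Fin m → EuclideanSpace ℝ (Fin n) → ℝ)
    (g : Fin m → EuclideanSpace ℝ (Fin n) → EuclideanSpace ℝ (Fin n))
    (hgrad : ∀ i y, HasGradientAt (f i) (g i y) y)
    (η : Fin m → ℝ) (hη0 : ∀ i, 0 ≤ η i) (hη1 : ∀ i, η i < 1 / 2)
    (htcc : ∀ i x₁ x₂, |f i x₁ - f i x₂ - ⟪g i x₁, x₁ - x₂⟫| ≤ η i * |f i x₁ - f i x₂|)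
    (ηm : ℝ) (hηm : ηm = ⨆ i, η i)
    (xs : EuclideanSpace ℝ (Fin n)) (hxs : ∀ i, f i xs = 0)
    (x : EuclideanSpace ℝ (Fin n))
    (τ : Finset (Fin m)) (hτ : τ.Nonempty)
    (A : Matrix ↥τ (Fin n) ℝ) (hA : ∀ (i : ↥τ) (j : Fin n), A i j = g i x j)
    (B : Matrix (Fin n) ↥τ ℝ)
    (hB1 : A * B * A = A) (hB2 : B * A * B = B)
    (hB3 : (A * B)ᵀ = A * B) (hB4 : (B * A)ᵀ = B * A)
    (h σ : ℝ) (hh : 0 ≤ h) (hσ : 0 ≤ σ)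
    (hlow : ∀ v : ↥τ → ℝ, h * Real.sqrt (∑ i, v i ^ 2)
      ≤ ‖(EuclideanSpace.equiv (Fin n) ℝ).symm (B.mulVec v)‖)
    (hup : ∀ v : ↥τ → ℝ, ‖(EuclideanSpace.equiv (Fin n) ℝ).symm (B.mulVec v)‖
      ≤ σ * Real.sqrt (∑ i, v i ^ 2)) :
    ‖(x - (EuclideanSpace.equiv (Fin n) ℝ).symm (B.mulVec fun i : ↥τ => f i x)) - xs‖ ^ 2
      ≤ ‖x - xs‖ ^ 2 - (h ^ 2 - 2 * ηm * σ ^ 2) * ∑ i ∈ τ, (f i x) ^ 2 := by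
  subst hηm
  have inner_row := toEuclideanLin_apply_eq_inner (g := fun i : τ => g i x) hA
  have htcc_sup (i : τ) :
      |f i x - f i xs - A.toEuclideanLin (x - xs) i| ≤ (⨆ i, η i) * |f i x - f i xs| := by
    rw [inner_row]
    exact (htcc i x xs).trans (by gcongr; exact le_ciSup (Set.finite_range η).bddAbove _)
  simp only [← norm_toLp_eq_sqrt_sum_sq] at hlow hup
  rw [← sum_coe_sort τ fun i => f i x ^ 2,
    ← EuclideanSpace.real_norm_sq_eq (WithLp.toLp 2 fun i : τ => f i x)]
  exact stmt2_general
    (hasFDerivAt_toLp_of_hasGradientAt (A := A.toEuclideanLin.toContinuousLinearMap)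
      (fun i : τ => hgrad i x) inner_row)
    (PiLp.ext fun i => hxs i)
    (norm_le_mul_norm_of_forall_abs_apply_le (Real.iSup_nonneg hη0) htcc_sup)
    (toEuclideanLin_comp_comp_self hB2)
    (isSymmetric_toEuclideanLin_comp ((conjTranspose_eq_transpose_of_trivial _).trans hB4))
    hh (hlow _) fun v => hup v
end

section
/- Let x ∈ ℝⁿ satisfy f(x) ≠ 0 and ∇f_i(x) ≠ 0 for all i, and write U = U(x). Then Σ_{i∈U} ( |f_i(x)|² / Σ_{j∈U} |f_j(x)|² ) · ( |f_i(x)|²/‖∇f_i(x)‖² ) ≥ ε(x)·‖f(x)‖². -/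
/-
The number `ε(x) ‖f(x)‖²` is the average of the largest ratio `|fᵢ(x)|² / ‖∇fᵢ(x)‖²` and of
`‖f(x)‖² / ∑ⱼ ‖∇fⱼ(x)‖²`. The latter is the mediant of the same ratios, so neither it nor the
average exceeds the largest ratio, and `U(x)` contains every index attaining the maximum. Hence the
weights `|fᵢ(x)|² / ∑_{j ∈ U} |fⱼ(x)|²` have a nonzero denominator and sum to one, and they average
ratios that are all at least `ε(x) ‖f(x)‖²`.
-/

open Finset

/-- The capped threshold `ε(x)` of the DR-CNK method. -/
noncomputable def eps {n m : ℕ} (f : Fin m → EuclideanSpace ℝ (Fin n) → ℝ)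
    (g : Fin m → EuclideanSpace ℝ (Fin n) → EuclideanSpace ℝ (Fin n))
    (x : EuclideanSpace ℝ (Fin n)) : ℝ :=
  (1 / 2) * ((1 / ∑ j, (f j x) ^ 2) * (⨆ i, (f i x) ^ 2 / ‖g i x‖ ^ 2)
    + 1 / ∑ j, ‖g j x‖ ^ 2)

open Classical in
/-- The index set `U(x)` of the DR-CNK method. -/
noncomputable def Uset {n m : ℕ} (f : Fin m → EuclideanSpace ℝ (Fin n) → ℝ)
    (g : Fin m → EuclideanSpace ℝ (Fin n) → EuclideanSpace ℝ (Fin n))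
    (x : EuclideanSpace ℝ (Fin n)) : Finset (Fin m) :=
  Finset.univ.filter fun i => (f i x) ^ 2 ≥ eps f g x * (∑ j, (f j x) ^ 2) * ‖g i x‖ ^ 2

section WeightedMeans

variable {ι K : Type*} [Field K] [LinearOrder K] [IsStrictOrderedRing K] {s : Finset ι}

theorem le_sum_div_sum_mul {w r : ι → K} {τ : K} (hw : ∀ i ∈ s, 0 ≤ w i)
    (hs : 0 < ∑ i ∈ s, w i) (hr : ∀ i ∈ s, τ ≤ r i) :
    τ ≤ ∑ i ∈ s, w i / (∑ j ∈ s, w j) * r i := by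
  have sum_weights : ∑ i ∈ s, w i / ∑ j ∈ s, w j = 1 := by rw [← sum_div, div_self hs.ne']
  exact (convex_Ici τ).sum_mem (fun i hi => div_nonneg (hw i hi) hs.le) sum_weights hr

theorem sum_div_sum_le_of_forall_div_le {a b : ι → K} {M : K} (hs : s.Nonempty)
    (hb : ∀ i ∈ s, 0 < b i) (h : ∀ i ∈ s, a i / b i ≤ M) :
    (∑ i ∈ s, a i) / ∑ i ∈ s, b i ≤ M := by
  rw [div_le_iff₀ (sum_pos hb hs), mul_sum]
  exact sum_le_sum fun i hi => (div_le_iff₀ (hb i hi)).mp (h i hi)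

end WeightedMeans

section Ratios

variable {ι : Type*} {a b : ι → ℝ}

theorem exists_pos_and_div_eq_iSup [Finite ι] (ha : 0 < a) (hb : ∀ i, 0 < b i) :
    ∃ p, 0 < a p ∧ a p / b p = ⨆ i, a i / b i := by
  obtain ⟨-, k, hk⟩ := Pi.lt_def.mp ha
  have : Nonempty ι := ⟨k⟩
  obtain ⟨p, hp⟩ := exists_eq_ciSup_of_finite (f := fun i => a i / b i)
  refine ⟨p, (div_pos_iff_of_pos_right (hb p)).mp ?_, hp⟩
  calc
    0 < a k / b k := div_pos hk (hb k)
    _ ≤ ⨆ i, a i / b i := Finite.le_ciSup (fun i => a i / b i) k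
    _ = a p / b p := hp.symm

theorem le_sum_div_sum_mul_of_le_iSup_div [Finite ι] (ha : 0 < a) (hb : ∀ i, 0 < b i)
    {τ : ℝ} (hτ : τ ≤ ⨆ i, a i / b i) {U : Finset ι} (hU : ∀ i, i ∈ U ↔ τ * b i ≤ a i) :
    τ ≤ ∑ i ∈ U, a i / (∑ j ∈ U, a j) * (a i / b i) := by
  obtain ⟨p, hap, hp⟩ := exists_pos_and_div_eq_iSup ha hb
  have p_mem : p ∈ U := (hU p).mpr ((le_div_iff₀ (hb p)).mp (hτ.trans_eq hp.symm))
  have sum_U_pos : 0 < ∑ i ∈ U, a i := sum_pos' (fun i _ => ha.le i) ⟨p, p_mem, hap⟩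
  exact le_sum_div_sum_mul (fun i _ => ha.le i) sum_U_pos
    fun i hi => (le_div_iff₀ (hb i)).mpr ((hU i).mp hi)

variable [Fintype ι]

/-- The threshold `ε(x)` as a function of `a i = |fᵢ(x)|²` and `b i = ‖∇fᵢ(x)‖²`: `U(x)` and the
expected decrease depend on `f` only through these two families. -/
noncomputable def cappedThreshold (a b : ι → ℝ) : ℝ :=
  (1 / 2) * ((1 / ∑ j, a j) * (⨆ i, a i / b i) + 1 / ∑ j, b j)

theorem cappedThreshold_mul_sum (ha : ∑ i, a i ≠ 0) :
    cappedThreshold a b * ∑ i, a i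
      = ((⨆ i, a i / b i) + (∑ i, a i) / ∑ i, b i) / 2 := by
  unfold cappedThreshold
  field_simp

theorem cappedThreshold_mul_sum_le_iSup_div (ha : 0 < a) (hb : ∀ i, 0 < b i) :
    cappedThreshold a b * ∑ i, a i ≤ ⨆ i, a i / b i := by
  obtain ⟨-, k, -⟩ := Pi.lt_def.mp ha
  have : Nonempty ι := ⟨k⟩
  have mediant_le : (∑ i, a i) / ∑ i, b i ≤ ⨆ i, a i / b i :=
    sum_div_sum_le_of_forall_div_le univ_nonempty (fun i _ => hb i)
      fun i _ => Finite.le_ciSup (fun i => a i / b i) i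
  rw [cappedThreshold_mul_sum (Fintype.sum_pos ha).ne']
  linarith

theorem stmt6_general (ha : 0 < a) (hb : ∀ i, 0 < b i) {U : Finset ι}
    (hU : ∀ i, i ∈ U ↔ cappedThreshold a b * (∑ j, a j) * b i ≤ a i) :
    cappedThreshold a b * ∑ j, a j ≤ ∑ i ∈ U, a i / (∑ j ∈ U, a j) * (a i / b i) :=
  le_sum_div_sum_mul_of_le_iSup_div ha hb (cappedThreshold_mul_sum_le_iSup_div ha hb) hU

end Ratios

section DRCNK

variable {n m : ℕ} {f : Fin m → EuclideanSpace ℝ (Fin n) → ℝ}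
  {g : Fin m → EuclideanSpace ℝ (Fin n) → EuclideanSpace ℝ (Fin n)} {x : EuclideanSpace ℝ (Fin n)}

theorem eps_eq_cappedThreshold :
    eps f g x = cappedThreshold (fun i => (f i x) ^ 2) (fun i => ‖g i x‖ ^ 2) :=
  rfl

theorem mem_Uset {i : Fin m} :
    i ∈ Uset f g x ↔ eps f g x * (∑ j, (f j x) ^ 2) * ‖g i x‖ ^ 2 ≤ (f i x) ^ 2 := by
  simp only [Uset, mem_filter_univ, ge_iff_le]

end DRCNK

/-- the expected weighted distance decrease of the DR-CNK
sampling is at least `ε(x)·‖f(x)‖²`. -/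
theorem stmt6 {n m : ℕ} (hn : 0 < n) (hm : 0 < m)
    (f : Fin m → EuclideanSpace ℝ (Fin n) → ℝ)
    (g : Fin m → EuclideanSpace ℝ (Fin n) → EuclideanSpace ℝ (Fin n))
    (hgrad : ∀ i y, HasGradientAt (f i) (g i y) y)
    (x : EuclideanSpace ℝ (Fin n)) (hfx : (fun i => f i x) ≠ 0)
    (hg : ∀ i, g i x ≠ 0) :
    ∑ i ∈ Uset f g x,
        ((f i x) ^ 2 / ∑ j ∈ Uset f g x, (f j x) ^ 2) * ((f i x) ^ 2 / ‖g i x‖ ^ 2)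
      ≥ eps f g x * ∑ j, (f j x) ^ 2 := by
  rw [ge_iff_le, eps_eq_cappedThreshold]
  exact stmt6_general (lt_of_le_of_ne' (fun i => sq_nonneg (f i x)) (pow_ne_zero 2 hfx))
    (fun i => pow_pos (norm_pos_iff.mpr (hg i)) 2) fun _ => eps_eq_cappedThreshold ▸ mem_Uset
end

section
/- (Comparison of the DR-CNK and NRK convergence factors.) Let x ∈ ℝⁿ satisfy f(x) ≠ 0 and ∇f_i(x) ≠ 0 for all i, let 0 < η < 1/2, and let h > 0 be a real number. Then ((1 − 2η)/(1 + η²))·ε(x)·h² > ((1 − 2η)/(1 + η)²)·h²/( m·Σ_{j=1}^m ‖∇f_j(x)‖² ); equivalently, 1 − ((1 − 2η)/(1 + η²))·ε(x)·h² < 1 − ((1 − 2η)/(1 + η)²)·h²/( m·Σ_{j=1}^m ‖∇f_j(x)‖² ). -/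
open Finset

/-! The largest ratio `f_i² / ‖∇f_i‖²` is at least the mediant `∑ f_j² / ∑ ‖∇f_j‖²`, so both
quantities averaged in `ε` are at least `1 / ∑ ‖∇f_j‖²`. Hence so is `ε`, and the comparison is
strict because `1 + η² < (1 + η)²`; the factor `1 / m` only helps. -/

section FirstOrderData

variable {ι E : Type*} [Fintype ι]

/-- The capped threshold `ε` of the DR-CNK method as a function of the residuals `r i = f_i(x)` and
the gradients `v i = ∇f_i(x)` alone, so that the comparison needs no ambient `ℝⁿ`. -/
noncomputable def drcnkThreshold [Norm E] (r : ι → ℝ) (v : ι → E) : ℝ :=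
  (1 / 2) * ((1 / ∑ j, r j ^ 2) * (⨆ i, r i ^ 2 / ‖v i‖ ^ 2) + 1 / ∑ j, ‖v j‖ ^ 2)

theorem eps_eq_drcnkThreshold {n m : ℕ} (f : Fin m → EuclideanSpace ℝ (Fin n) → ℝ)
    (g : Fin m → EuclideanSpace ℝ (Fin n) → EuclideanSpace ℝ (Fin n))
    (x : EuclideanSpace ℝ (Fin n)) :
    eps f g x = drcnkThreshold (fun i ↦ f i x) (fun i ↦ g i x) :=
  rfl

theorem sum_le_iSup_div_mul_sum {a b : ι → ℝ} (hb : ∀ i, 0 < b i) :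
    ∑ i, a i ≤ (⨆ i, a i / b i) * ∑ i, b i := by
  rw [mul_sum]
  refine sum_le_sum fun i _ ↦ (div_le_iff₀ (hb i)).1 ?_
  exact le_ciSup (f := fun i ↦ a i / b i) (Set.finite_range _).bddAbove i

theorem one_div_sum_le_one_div_sum_mul_iSup_div {a b : ι → ℝ} (ha : 0 < ∑ i, a i)
    (hb : ∀ i, 0 < b i) :
    1 / ∑ i, b i ≤ (1 / ∑ i, a i) * ⨆ i, a i / b i := by
  have : Nonempty ι := univ_nonempty_iff.1 (nonempty_of_sum_ne_zero ha.ne')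
  have hB : 0 < ∑ i, b i := sum_pos (fun i _ ↦ hb i) univ_nonempty
  rw [one_div_mul_eq_div, div_le_div_iff₀ hB ha, one_mul]
  exact sum_le_iSup_div_mul_sum hb

theorem sum_sq_pos {R : Type*} [Ring R] [LinearOrder R] [IsStrictOrderedRing R] {r : ι → R}
    (hr : r ≠ 0) : 0 < ∑ i, r i ^ 2 := by
  obtain ⟨i, hi⟩ := Function.ne_iff.1 hr
  exact sum_pos' (fun j _ ↦ sq_nonneg (r j)) ⟨i, mem_univ i, sq_pos_of_ne_zero hi⟩

variable [NormedAddCommGroup E]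

theorem one_div_sum_norm_sq_le_drcnkThreshold {r : ι → ℝ} {v : ι → E} (hr : r ≠ 0)
    (hv : ∀ i, v i ≠ 0) :
    1 / ∑ i, ‖v i‖ ^ 2 ≤ drcnkThreshold r v := by
  have hratio : 1 / ∑ i, ‖v i‖ ^ 2 ≤ (1 / ∑ i, r i ^ 2) * ⨆ i, r i ^ 2 / ‖v i‖ ^ 2 :=
    one_div_sum_le_one_div_sum_mul_iSup_div (sum_sq_pos hr)
      fun i ↦ pow_pos (norm_pos_iff.2 (hv i)) 2
  unfold drcnkThreshold
  linarith

theorem stmt10_general {r : ι → ℝ} {v : ι → E} (hr : r ≠ 0) (hv : ∀ i, v i ≠ 0)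
    {η : ℝ} (hη0 : 0 < η) (hη1 : η < 1 / 2) {h : ℝ} (hh : h ≠ 0) :
    ((1 - 2 * η) / (1 + η ^ 2)) * drcnkThreshold r v * h ^ 2
        > ((1 - 2 * η) / (1 + η) ^ 2) * h ^ 2 / ((Fintype.card ι : ℝ) * ∑ j, ‖v j‖ ^ 2)
    ∧ 1 - ((1 - 2 * η) / (1 + η ^ 2)) * drcnkThreshold r v * h ^ 2
        < 1 - ((1 - 2 * η) / (1 + η) ^ 2) * h ^ 2
          / ((Fintype.card ι : ℝ) * ∑ j, ‖v j‖ ^ 2) := by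
  obtain ⟨i₀, -⟩ := Function.ne_iff.1 hr
  have : Nonempty ι := ⟨i₀⟩
  have hcard : (1 : ℝ) ≤ Fintype.card ι := mod_cast Fintype.card_pos (α := ι)
  have hS : 0 < ∑ j, ‖v j‖ ^ 2 :=
    sum_pos (fun i _ ↦ pow_pos (norm_pos_iff.2 (hv i)) 2) univ_nonempty
  have hc : 0 < 1 - 2 * η := by linarith
  have hη : 1 + η ^ 2 < (1 + η) ^ 2 := by linarith [add_sq 1 η]
  have hfactor : ((1 - 2 * η) / (1 + η) ^ 2) * h ^ 2 / ((Fintype.card ι : ℝ) * ∑ j, ‖v j‖ ^ 2)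
      < ((1 - 2 * η) / (1 + η ^ 2)) * drcnkThreshold r v * h ^ 2 :=
    calc ((1 - 2 * η) / (1 + η) ^ 2) * h ^ 2 / ((Fintype.card ι : ℝ) * ∑ j, ‖v j‖ ^ 2)
        ≤ ((1 - 2 * η) / (1 + η) ^ 2) * h ^ 2 / ∑ j, ‖v j‖ ^ 2 := by
          gcongr
          exact le_mul_of_one_le_left hS.le hcard
      _ < ((1 - 2 * η) / (1 + η ^ 2)) * h ^ 2 / ∑ j, ‖v j‖ ^ 2 := by
          gcongr
      _ = ((1 - 2 * η) / (1 + η ^ 2)) * (1 / ∑ j, ‖v j‖ ^ 2) * h ^ 2 := by ring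
      _ ≤ ((1 - 2 * η) / (1 + η ^ 2)) * drcnkThreshold r v * h ^ 2 := by
          gcongr
          exact one_div_sum_norm_sq_le_drcnkThreshold hr hv
  exact ⟨hfactor, sub_lt_sub_left hfactor 1⟩

end FirstOrderData

/-- comparison of the DR-CNK and NRK convergence factors. -/
theorem stmt10 {n m : ℕ} (hn : 0 < n) (hm : 0 < m)
    (f : Fin m → EuclideanSpace ℝ (Fin n) → ℝ)
    (g : Fin m → EuclideanSpace ℝ (Fin n) → EuclideanSpace ℝ (Fin n))
    (hgrad : ∀ i y, HasGradientAt (f i) (g i y) y)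
    (x : EuclideanSpace ℝ (Fin n)) (hfx : (fun i => f i x) ≠ 0)
    (hg : ∀ i, g i x ≠ 0)
    (η : ℝ) (hη0 : 0 < η) (hη1 : η < 1 / 2)
    (h : ℝ) (hh : 0 < h) :
    ((1 - 2 * η) / (1 + η ^ 2)) * eps f g x * h ^ 2
        > ((1 - 2 * η) / (1 + η) ^ 2) * h ^ 2 / ((m : ℝ) * ∑ j, ‖g j x‖ ^ 2)
    ∧ 1 - ((1 - 2 * η) / (1 + η ^ 2)) * eps f g x * h ^ 2
        < 1 - ((1 - 2 * η) / (1 + η) ^ 2) * h ^ 2 / ((m : ℝ) * ∑ j, ‖g j x‖ ^ 2) := by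
  simpa only [eps_eq_drcnkThreshold, Fintype.card_fin] using
    stmt10_general hfx hg hη0 hη1 hh.ne'
end
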